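/- Let M be a Hausdorff topological space, I an index type, Ω : I → Set M a family of open subsets, and r a reflexive and symmetric relation on I such that: (1) for all i, j, the set Ω i ∩ Ω j is preconnected (i.e. has at most one connected component); (2) if r i j then Ω i ∩ Ω j is nonempty; (3) if r i j, r j k and Ω i ∩ Ω j ∩ Ω k is nonempty, then r i k. Then there exist a Hausdorff topological space N, a local homeomorphism φ : N → M, and for each i a continuous map α i : Ω i → N, such that: (A) the images α i '' (Ω i) cover N; (B) for all i, j, r i j holds if and only if α i '' (Ω i) ∩ α j '' (Ω j) is nonempty; and (C) for every i and every x ∈ Ω i, φ (α i x) = x. -/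

import Mathlib

/-- Existence part of the join construction (Theorem 2.2.1), stated topologically. -/
theorem join_existence.{u, v}
    (M : Type u) [TopologicalSpace M] [T2Space M]
    (I : Type v) (Ω : I → Set M) (hΩ : ∀ i, IsOpen (Ω i))
    (r : I → I → Prop) (hrefl : ∀ i, r i i) (hsymm : ∀ i j, r i j → r j i)
    (h1 : ∀ i j, IsPreconnected (Ω i ∩ Ω j))
    (h2 : ∀ i j, r i j → (Ω i ∩ Ω j).Nonempty)
    (h3 : ∀ i j k, r i j → r j k → (Ω i ∩ Ω j ∩ Ω k).Nonempty → r i k) :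
    ∃ (N : Type (max u v)) (_ : TopologicalSpace N) (_ : T2Space N)
      (φ : N → M) (α : ∀ i, Ω i → N),
      IsLocalHomeomorph φ ∧ (∀ i, Continuous (α i)) ∧
      (⋃ i, Set.range (α i)) = Set.univ ∧
      (∀ i j, r i j ↔ (Set.range (α i) ∩ Set.range (α j)).Nonempty) ∧
      (∀ i (x : Ω i), φ (α i x) = (x : M)) := by
  let S : Setoid (Σ i, Ω i) :=
    { r := fun a b => (a.2 : M) = b.2 ∧ r a.1 b.1
      iseqv :=
        { refl := fun a => ⟨rfl, hrefl _⟩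
          symm := fun h => ⟨h.1.symm, hsymm _ _ h.2⟩
          trans := fun {a b c} h h' => ⟨h.1.trans h'.1, h3 _ _ _ h.2 h'.2
            ⟨a.2, ⟨a.2.2, h.1 ▸ b.2.2⟩, (h.1.trans h'.1) ▸ c.2.2⟩⟩ } }
  let q : (Σ i, Ω i) → Quotient S := Quotient.mk S
  have hq : Continuous q := continuous_quotient_mk'
  have hqs : Function.Surjective q := Quotient.mk_surjective
  have hqe : ∀ a b, q a = q b ↔ ((a.2 : M) = b.2 ∧ r a.1 b.1) := fun a b => Quotient.eq
  let φ : Quotient S → M := Quotient.lift (fun a => (a.2 : M)) (fun a b h => h.1)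
  have hφq : ∀ a, φ (q a) = a.2 := fun a => rfl
  have hφ : Continuous φ := by
    apply Continuous.quotient_lift
    exact continuous_sigma fun i => continuous_subtype_val
  have hα : ∀ i, Continuous (fun x : Ω i => q ⟨i, x⟩) := fun i => hq.comp continuous_sigmaMk
  have hrange : ∀ i, IsOpen (Set.range (fun x : Ω i => q ⟨i, x⟩)) := by
    intro i
    have hqm : Topology.IsQuotientMap q := isQuotientMap_quotient_mk'
    rw [← hqm.isOpen_preimage, isOpen_sigma_iff]
    intro k
    by_cases hk : r i k
    · convert (hΩ i).preimage (continuous_subtype_val (p := fun x => x ∈ Ω k)) using 1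
      ext x
      simp only [Set.mem_preimage, Set.mem_range, hqe]
      constructor
      · rintro ⟨y, hy, -⟩
        rw [← hy]
        exact y.2
      · intro hx
        exact ⟨⟨x, hx⟩, rfl, hk⟩
    · convert isOpen_empty using 1
      ext x
      simp only [Set.mem_preimage, Set.mem_range, hqe, Set.mem_empty_iff_false, iff_false]
      rintro ⟨y, -, h⟩
      exact hk h
  have hopen : IsOpenMap φ := by
    have hc : IsOpenMap (φ ∘ q) := by
      rw [isOpenMap_sigma]
      intro i
      exact (hΩ i).isOpenMap_subtype_val
    intro U hU
    have := hc _ (hU.preimage hq)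
    rwa [Set.image_comp, Set.image_preimage_eq _ hqs] at this
  have hB : ∀ i j, r i j ↔ (Set.range (fun x : Ω i => q ⟨i, x⟩) ∩
      Set.range (fun x : Ω j => q ⟨j, x⟩)).Nonempty := by
    intro i j
    constructor
    · intro h
      obtain ⟨x, hxi, hxj⟩ := h2 i j h
      refine ⟨q ⟨i, x, hxi⟩, ⟨_, rfl⟩, ⟨x, hxj⟩, ?_⟩
      exact (hqe _ _).2 ⟨rfl, hsymm _ _ h⟩
    · rintro ⟨_, ⟨x, rfl⟩, ⟨y, hy⟩⟩
      exact hsymm _ _ ((hqe _ _).1 hy).2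
  have hT2 : T2Space (Quotient S) := by
    refine ⟨fun a b hab => ?_⟩
    by_cases h : φ a = φ b
    · obtain ⟨⟨i, x⟩, rfl⟩ := hqs a
      obtain ⟨⟨j, y⟩, rfl⟩ := hqs b
      refine ⟨_, _, hrange i, hrange j, ⟨x, rfl⟩, ⟨y, rfl⟩, ?_⟩
      rw [Set.disjoint_iff_inter_eq_empty, ← Set.not_nonempty_iff_eq_empty, ← hB]
      exact fun hr => hab ((hqe _ _).2 ⟨h, hr⟩)
    · exact separated_by_continuous hφ h
  refine ⟨Quotient S, inferInstance, hT2, φ, fun i x => q ⟨i, x⟩, ?_, hα, ?_, hB, fun i x => rfl⟩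
  · rw [isLocalHomeomorph_iff_isOpenEmbedding_restrict]
    intro a
    obtain ⟨⟨i, x⟩, rfl⟩ := hqs a
    refine ⟨_, (hrange i).mem_nhds ⟨x, rfl⟩, ?_⟩
    refine Topology.IsOpenEmbedding.of_continuous_injective_isOpenMap
      (hφ.comp continuous_subtype_val) ?_ (hopen.domRestrict (hrange i))
    rintro ⟨_, y, rfl⟩ ⟨_, z, rfl⟩ h
    apply Subtype.ext
    exact (hqe _ _).2 ⟨h, hrefl i⟩
  · rw [Set.eq_univ_iff_forall]
    intro a
    obtain ⟨⟨i, x⟩, rfl⟩ := hqs a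
    exact Set.mem_iUnion.2 ⟨i, x, rfl⟩
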